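/- The multiplication operators P_v := M_{χ_{D_v}} on L²(X,μ), for v ∈ G⁰, are self-adjoint idempotents satisfying P_u ∘ P_v = 0 whenever u ≠ v; and for every v ∈ V with s⁻¹(v) ≠ ∅ one has the Cuntz–Krieger relation P_v = Σ_{e ∈ s⁻¹(v)} T_e T_e*, where T_e is the bounded operator with T_e φ = Φ_{f_e⁻¹}^{1/2}·(φ∘f_e⁻¹) on R_e and 0 elsewhere. -/

import Mathlib

/-!
Restricted to `D_{r(e)}` and `R_e`, the maps `f_e` and `f_e⁻¹` are mutually inverse nonsingular
isomorphisms, and `T_e` is the associated Koopman operator `φ ↦ Φ_{f_e⁻¹}^{1/2} · (φ ∘ f_e⁻¹)`.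
The chain rule `Φ_{f_e⁻¹} · (Φ_{f_e} ∘ f_e⁻¹) = 1` makes this a unitary `L²(D_{r(e)}) → L²(R_e)`
whose inverse is the Koopman operator of `f_e⁻¹`, so `T_e T_e*` is multiplication by `χ_{R_e}`.
Multiplication by indicators turns intersections into products and disjoint unions into sums, so
the relations among the `P_v` and `T_e T_e*` are the relations among the sets `D_v` and `R_e`.
-/

open MeasureTheory Set
open scoped ENNReal NNReal

section

variable {V0 E1 X : Type*}

/-- A relative `G`-branching system, relative to a set `V` of vertices, on a measure space
`(X, μ)`, for a directed graph with vertices `V0`, edges `E1`, range map `r` and source map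
`s`. The data consists of measurable sets `R e` (for edges) and `D v` (for vertices),
together with measurable maps `f e : D (r e) → R e` and `finv e : R e → D (r e)` that are
mutually inverse `μ`-a.e. and whose pushforward measures are absolutely continuous w.r.t.
`μ`. -/
structure RelBranchingSystem [MeasurableSpace X] (r s : E1 → V0) (V : Set V0)
    (μ : Measure X) (R : E1 → Set X) (D : V0 → Set X) (f finv : E1 → X → X) : Prop where
  measR : ∀ e, MeasurableSet (R e)
  measD : ∀ v, MeasurableSet (D v)
  measf : ∀ e, Measurable (f e)
  measfinv : ∀ e, Measurable (finv e)
  disjR : ∀ e e', e ≠ e' → μ (R e ∩ R e') = 0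
  disjD : ∀ u v, u ≠ v → μ (D u ∩ D v) = 0
  RsubD : ∀ e, μ (R e \ D (s e)) = 0
  CK : ∀ v ∈ V, (∃ e, s e = v) → μ (symmDiff (D v) (⋃ e ∈ {e' | s e' = v}, R e)) = 0
  mapsf : ∀ e, MapsTo (f e) (D (r e)) (R e)
  mapsfinv : ∀ e, MapsTo (finv e) (R e) (D (r e))
  inv_right : ∀ e, ∀ᵐ x ∂μ.restrict (R e), f e (finv e x) = x
  inv_left : ∀ e, ∀ᵐ t ∂μ.restrict (D (r e)), finv e (f e t) = t
  ac_f : ∀ e, (μ.restrict (D (r e))).map (f e) ≪ μ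
  ac_finv : ∀ e, (μ.restrict (R e)).map (finv e) ≪ μ

/-- The Radon–Nikodym derivative of the pushforward of `μ` restricted to `S` under `h`,
with respect to `μ`.  Taking `S = D (r e)`, `h = f e` gives `Φ_{f_e⁻¹}`, and taking
`S = R e`, `h = finv e` gives `Φ_{f_e}`. -/
noncomputable def pushDeriv [MeasurableSpace X] (μ : Measure X) (S : Set X) (h : X → X) :
    X → ℝ≥0∞ :=
  ((μ.restrict S).map h).rnDeriv μ

/-- The function `x ↦ χ_{R e}(x) · Φ_{f_e⁻¹}(x)^{1/2} · φ(f_e⁻¹ x)`, i.e. the prospective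
action of the partial isometry `T_e` on a function `φ`. -/
noncomputable def Taction [MeasurableSpace X] (μ : Measure X) (Re DRe : Set X)
    (fe finve : X → X) (φ : X → ℂ) : X → ℂ :=
  Re.indicator fun x => (Real.sqrt ((pushDeriv μ DRe fe x).toReal) : ℂ) * φ (finve x)

section IndicatorMul

variable [MeasurableSpace X] {μ : Measure X} {p : ℝ≥0∞} {𝕜 E : Type*} [NormedAddCommGroup E]

/-- The operator `P` on `Lᵖ(X, μ)` is multiplication by `χ_S`. This is a predicate on operators,
rather than a construction of one, since `P v` and `T e` are given only through their values. -/
def IsIndicatorMul [NormedField 𝕜] [NormedSpace 𝕜 E] [Fact (1 ≤ p)]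
    (P : Lp E p μ →L[𝕜] Lp E p μ) (S : Set X) : Prop :=
  ∀ φ : Lp E p μ, P φ =ᵐ[μ] S.indicator φ

namespace IsIndicatorMul

section Algebra

variable [NormedField 𝕜] [NormedSpace 𝕜 E] [Fact (1 ≤ p)]
  {P Q : Lp E p μ →L[𝕜] Lp E p μ} {S S' : Set X}

theorem zero : IsIndicatorMul (0 : Lp E p μ →L[𝕜] Lp E p μ) ∅ := fun φ => by
  simpa using! Lp.coeFn_zero E p μ

theorem congr_set (hP : IsIndicatorMul P S) (hS : S =ᵐ[μ] S') : IsIndicatorMul P S' :=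
  fun φ => (hP φ).trans (indicator_ae_eq_of_ae_eq_set hS)

theorem unique (hP : IsIndicatorMul P S) (hQ : IsIndicatorMul Q S) : P = Q :=
  ContinuousLinearMap.ext fun φ => Lp.ext ((hP φ).trans (hQ φ).symm)

theorem comp (hP : IsIndicatorMul P S) (hQ : IsIndicatorMul Q S') :
    IsIndicatorMul (P ∘L Q) (S ∩ S') := fun φ => by
  filter_upwards [hP (Q φ), hQ φ] with x hPx hQx
  rw [ContinuousLinearMap.comp_apply, hPx, ← indicator_indicator]
  by_cases hx : x ∈ S <;> simp [hx, hQx]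

theorem comp_self (hP : IsIndicatorMul P S) : P ∘L P = P :=
  (inter_self S ▸ hP.comp hP).unique hP

theorem comp_eq_zero (hP : IsIndicatorMul P S) (hQ : IsIndicatorMul Q S')
    (hS : AEDisjoint μ S S') : P ∘L Q = 0 :=
  ((hP.comp hQ).congr_set (ae_eq_empty.2 hS)).unique zero

theorem add (hP : IsIndicatorMul P S) (hQ : IsIndicatorMul Q S') (hS : AEDisjoint μ S S') :
    IsIndicatorMul (P + Q) (S ∪ S') := fun φ => by
  filter_upwards [hP φ, hQ φ, Lp.coeFn_add (P φ) (Q φ), measure_eq_zero_iff_ae_notMem.1 hS]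
    with x hPx hQx hadd hx
  rw [add_apply, hadd, Pi.add_apply, hPx, hQx, indicator_union_of_notMem_inter hx]

theorem sum {ι : Type*} {A : ι → Lp E p μ →L[𝕜] Lp E p μ} {B : ι → Set X}
    (F : Finset ι) (hA : ∀ i ∈ F, IsIndicatorMul (A i) (B i))
    (hB : (F : Set ι).Pairwise fun i j => AEDisjoint μ (B i) (B j)) :
    IsIndicatorMul (∑ i ∈ F, A i) (⋃ i ∈ F, B i) := by
  classical
  induction F using Finset.induction_on with
  | empty => simpa using zero
  | insert i F hi ih =>
    have hdisj : AEDisjoint μ (B i) (⋃ j ∈ F, B j) := by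
      rw [AEDisjoint, inter_iUnion₂]
      exact (measure_biUnion_null_iff F.countable_toSet).2 fun j hj =>
        hB (F.mem_insert_self i) (Finset.mem_insert_of_mem hj) (ne_of_mem_of_not_mem hj hi).symm
    have hsum : IsIndicatorMul (∑ j ∈ F, A j) (⋃ j ∈ F, B j) :=
      ih (fun j hj => hA j (Finset.mem_insert_of_mem hj))
        (hB.mono (Finset.coe_subset.2 (F.subset_insert i)))
    rw [Finset.sum_insert hi, Finset.set_biUnion_insert]
    exact (hA i (F.mem_insert_self i)).add hsum hdisj

end Algebra

theorem adjoint_eq [RCLike 𝕜] [InnerProductSpace 𝕜 E] [CompleteSpace E]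
    {P : Lp E 2 μ →L[𝕜] Lp E 2 μ} {S : Set X} (hP : IsIndicatorMul P S) :
    ContinuousLinearMap.adjoint P = P := by
  refine ((ContinuousLinearMap.eq_adjoint_iff P P).2 fun φ ψ => ?_).symm
  rw [L2.inner_def, L2.inner_def]
  refine integral_congr_ae ?_
  filter_upwards [hP φ, hP ψ] with x hφ hψ
  rw [hφ, hψ]
  by_cases hx : x ∈ S <;> simp [hx]

end IsIndicatorMul

end IndicatorMul

section Koopman

variable {α β 𝕜 E : Type*} [MeasurableSpace α] [MeasurableSpace β]

/-- The maps `f : α → β` and `g : β → α` are nonsingular isomorphisms between `(α, μ)` and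
`(β, ν)`, inverse to each other: both are quasi-measure-preserving and they are mutually inverse
almost everywhere. -/
structure IsNonsingularIso (f : α → β) (g : β → α) (μ : Measure α) (ν : Measure β) : Prop where
  quasiMeasurePreserving : Measure.QuasiMeasurePreserving f μ ν
  quasiMeasurePreserving_inv : Measure.QuasiMeasurePreserving g ν μ
  left_inv : ∀ᵐ x ∂μ, g (f x) = x
  right_inv : ∀ᵐ y ∂ν, f (g y) = y

/-- The Koopman operator `φ ↦ Φ^{1/2} · (φ ∘ g)` of a nonsingular isomorphism `f : (α, μ) → (β, ν)`
with inverse `g`, where `Φ` is the density of `f_* μ` with respect to `ν`. -/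
noncomputable def koopman (𝕜 : Type*) [RCLike 𝕜] [SMul 𝕜 E] (f : α → β) (g : β → α)
    (μ : Measure α) (ν : Measure β) (φ : α → E) : β → E :=
  fun y => (√((μ.map f).rnDeriv ν y).toReal : 𝕜) • φ (g y)

namespace IsNonsingularIso

variable {f : α → β} {g : β → α} {μ : Measure α} {ν : Measure β}

protected theorem symm (h : IsNonsingularIso f g μ ν) : IsNonsingularIso g f ν μ :=
  ⟨h.quasiMeasurePreserving_inv, h.quasiMeasurePreserving, h.right_inv, h.left_inv⟩

theorem map_map_eq_self (h : IsNonsingularIso f g μ ν) : (μ.map f).map g = μ := by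
  rw [Measure.map_map h.quasiMeasurePreserving_inv.measurable h.quasiMeasurePreserving.measurable,
    Measure.map_congr (f := g ∘ f) (g := id) h.left_inv, Measure.map_id]

theorem quasiMeasurePreserving_map_inv (h : IsNonsingularIso f g μ ν) :
    Measure.QuasiMeasurePreserving g (μ.map f) μ :=
  ⟨h.quasiMeasurePreserving_inv.measurable, h.map_map_eq_self.absolutelyContinuous⟩

theorem sigmaFinite_map [SigmaFinite μ] (h : IsNonsingularIso f g μ ν) :
    SigmaFinite (μ.map f) :=
  .of_map _ h.quasiMeasurePreserving_inv.measurable.aemeasurable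
    (h.map_map_eq_self.symm ▸ ‹SigmaFinite μ›)

theorem koopman_congr_ae [RCLike 𝕜] [SMul 𝕜 E] (h : IsNonsingularIso f g μ ν) {φ ψ : α → E}
    (hφψ : φ =ᵐ[μ] ψ) :
    koopman 𝕜 f g μ ν φ =ᵐ[ν] koopman 𝕜 f g μ ν ψ :=
  (h.quasiMeasurePreserving_inv.ae_eq_comp hφψ).mono fun _ hy => congrArg _ hy

theorem aestronglyMeasurable_koopman [RCLike 𝕜] [NormedAddCommGroup E] [NormedSpace 𝕜 E]
    (h : IsNonsingularIso f g μ ν) {φ : α → E} (hφ : AEStronglyMeasurable φ μ) :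
    AEStronglyMeasurable (koopman 𝕜 f g μ ν φ) ν := by
  have hw : Measurable fun y => (√((μ.map f).rnDeriv ν y).toReal : 𝕜) := by fun_prop
  exact hw.aestronglyMeasurable.smul (hφ.comp_quasiMeasurePreserving h.quasiMeasurePreserving_inv)

variable [SigmaFinite μ] [SigmaFinite ν]

theorem lintegral_rnDeriv_mul_comp (h : IsNonsingularIso f g μ ν) {u : α → ℝ≥0∞}
    (hu : AEMeasurable u μ) :
    ∫⁻ y, (μ.map f).rnDeriv ν y * u (g y) ∂ν = ∫⁻ x, u x ∂μ := by
  have hug_ν : AEMeasurable (fun y => u (g y)) ν :=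
    hu.comp_quasiMeasurePreserving h.quasiMeasurePreserving_inv
  have hug_map : AEMeasurable (fun y => u (g y)) (μ.map f) :=
    hu.comp_quasiMeasurePreserving h.quasiMeasurePreserving_map_inv
  rw [lintegral_rnDeriv_mul h.quasiMeasurePreserving.absolutelyContinuous hug_ν,
    lintegral_map' hug_map h.quasiMeasurePreserving.aemeasurable]
  exact lintegral_congr_ae (h.left_inv.mono fun x hx => congrArg u hx)

theorem integral_rnDeriv_smul_comp [NormedAddCommGroup E] [NormedSpace ℝ E]
    (h : IsNonsingularIso f g μ ν) {u : α → E} (hu : AEStronglyMeasurable u μ) :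
    ∫ y, ((μ.map f).rnDeriv ν y).toReal • u (g y) ∂ν = ∫ x, u x ∂μ := by
  have := h.sigmaFinite_map
  have hug : AEStronglyMeasurable (fun y => u (g y)) (μ.map f) :=
    hu.comp_quasiMeasurePreserving h.quasiMeasurePreserving_map_inv
  rw [integral_rnDeriv_smul h.quasiMeasurePreserving.absolutelyContinuous,
    integral_map h.quasiMeasurePreserving.aemeasurable hug]
  exact integral_congr_ae (h.left_inv.mono fun x hx => congrArg u hx)

theorem integrable_rnDeriv_smul_comp [NormedAddCommGroup E] [NormedSpace ℝ E]
    (h : IsNonsingularIso f g μ ν) {u : α → E} (hu : Integrable u μ) :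
    Integrable (fun y => ((μ.map f).rnDeriv ν y).toReal • u (g y)) ν := by
  have := h.sigmaFinite_map
  rw [integrable_rnDeriv_smul_iff h.quasiMeasurePreserving.absolutelyContinuous]
  exact .comp_measurable (h.map_map_eq_self.symm ▸ hu) h.quasiMeasurePreserving_inv.measurable

theorem rnDeriv_mul_rnDeriv_comp (h : IsNonsingularIso f g μ ν) :
    ∀ᵐ y ∂ν, (μ.map f).rnDeriv ν y * (ν.map g).rnDeriv μ (g y) = 1 := by
  have hf := h.quasiMeasurePreserving.measurable
  have hg := h.quasiMeasurePreserving_inv.measurable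
  have hΨ : Measurable ((ν.map g).rnDeriv μ) := Measure.measurable_rnDeriv _ _
  -- Changing variables along `g` absorbs the first density; changing back along `f`, the second.
  refine ae_eq_of_forall_setLIntegral_eq_of_sigmaFinite
    ((Measure.measurable_rnDeriv _ _).mul (hΨ.comp hg)) measurable_const fun A hA _ => ?_
  have hχ : Measurable (A.indicator (1 : β → ℝ≥0∞)) := measurable_one.indicator hA
  calc ∫⁻ y in A, (μ.map f).rnDeriv ν y * (ν.map g).rnDeriv μ (g y) ∂ν
      = ∫⁻ y, (μ.map f).rnDeriv ν y *
          ((ν.map g).rnDeriv μ (g y) * A.indicator 1 (f (g y))) ∂ν := by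
        rw [← lintegral_indicator hA]
        refine lintegral_congr_ae (h.right_inv.mono fun y hy => ?_)
        by_cases hyA : y ∈ A <;> simp [hy, hyA]
    _ = ∫⁻ x, (ν.map g).rnDeriv μ x * A.indicator 1 (f x) ∂μ :=
        h.lintegral_rnDeriv_mul_comp (hΨ.mul (hχ.comp hf)).aemeasurable
    _ = ∫⁻ y, A.indicator 1 y ∂ν := h.symm.lintegral_rnDeriv_mul_comp hχ.aemeasurable
    _ = ∫⁻ _ in A, 1 ∂ν := lintegral_indicator hA 1

section NormedSpace

variable [RCLike 𝕜] [NormedAddCommGroup E] [NormedSpace 𝕜 E]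

theorem koopman_koopman (h : IsNonsingularIso f g μ ν) (ψ : β → E) :
    koopman 𝕜 f g μ ν (koopman 𝕜 g f ν μ ψ) =ᵐ[ν] ψ := by
  filter_upwards [h.rnDeriv_mul_rnDeriv_comp, h.right_inv] with y hΦ hy
  rw [koopman, koopman, hy, smul_smul, ← RCLike.ofReal_mul,
    ← Real.sqrt_mul ENNReal.toReal_nonneg, ← ENNReal.toReal_mul, hΦ]
  simp

theorem memLp_koopman (h : IsNonsingularIso f g μ ν) {φ : α → E} (hφ : MemLp φ 2 μ) :
    MemLp (koopman 𝕜 f g μ ν φ) 2 ν := by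
  rw [memLp_two_iff_integrable_sq_norm (h.aestronglyMeasurable_koopman hφ.1)]
  refine (h.integrable_rnDeriv_smul_comp ((memLp_two_iff_integrable_sq_norm hφ.1).1 hφ)).congr
    (.of_forall fun y => ?_)
  simp only [koopman, norm_smul, mul_pow, RCLike.norm_ofReal, sq_abs,
    Real.sq_sqrt ENNReal.toReal_nonneg, smul_eq_mul]

end NormedSpace

variable [RCLike 𝕜] [NormedAddCommGroup E] [InnerProductSpace 𝕜 E]

theorem integral_inner_koopman_koopman (h : IsNonsingularIso f g μ ν) {φ ψ : α → E}
    (hφ : AEStronglyMeasurable φ μ) (hψ : AEStronglyMeasurable ψ μ) :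
    ∫ y, inner 𝕜 (koopman 𝕜 f g μ ν φ y) (koopman 𝕜 f g μ ν ψ y) ∂ν
      = ∫ x, inner 𝕜 (φ x) (ψ x) ∂μ := by
  rw [← h.integral_rnDeriv_smul_comp (hφ.inner hψ)]
  congr 1 with y
  rw [koopman, koopman, inner_smul_left, inner_smul_right, RCLike.conj_ofReal, ← mul_assoc,
    ← RCLike.ofReal_mul, Real.mul_self_sqrt ENNReal.toReal_nonneg, RCLike.real_smul_eq_coe_mul]

theorem integral_inner_koopman (h : IsNonsingularIso f g μ ν) {φ : α → E} {ψ : β → E}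
    (hφ : AEStronglyMeasurable φ μ) (hψ : AEStronglyMeasurable ψ ν) :
    ∫ y, inner 𝕜 (koopman 𝕜 f g μ ν φ y) (ψ y) ∂ν
      = ∫ x, inner 𝕜 (φ x) (koopman 𝕜 g f ν μ ψ x) ∂μ := by
  rw [← h.integral_inner_koopman_koopman hφ (h.symm.aestronglyMeasurable_koopman hψ)]
  exact integral_congr_ae ((h.koopman_koopman (𝕜 := 𝕜) ψ).mono fun y hy => by simp only [hy])

end IsNonsingularIso

end Koopman

section KoopmanBetweenSubsets

variable [MeasurableSpace X] {μ : Measure X} {D R : Set X} {f g : X → X}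

namespace IsNonsingularIso

variable {𝕜 E : Type*} [RCLike 𝕜] [NormedAddCommGroup E] [InnerProductSpace 𝕜 E] [CompleteSpace E]
  [SigmaFinite μ] {T : Lp E 2 μ →L[𝕜] Lp E 2 μ}

theorem coeFn_adjoint (h : IsNonsingularIso f g (μ.restrict D) (μ.restrict R))
    (hD : MeasurableSet D) (hR : MeasurableSet R)
    (hT : ∀ φ : Lp E 2 μ, T φ =ᵐ[μ]
      R.indicator (koopman 𝕜 f g (μ.restrict D) (μ.restrict R) φ)) (ψ : Lp E 2 μ) :
    ContinuousLinearMap.adjoint T ψ =ᵐ[μ]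
      D.indicator (koopman 𝕜 g f (μ.restrict R) (μ.restrict D) ψ) := by
  have hψ : MemLp ψ 2 (μ.restrict R) := (Lp.memLp ψ).restrict R
  have hmem : MemLp (D.indicator (koopman 𝕜 g f (μ.restrict R) (μ.restrict D) ψ)) 2 μ :=
    (memLp_indicator_iff_restrict hD).2 (h.symm.memLp_koopman hψ)
  suffices hadj : ContinuousLinearMap.adjoint T ψ = hmem.toLp _ from hadj ▸ hmem.coeFn_toLp
  refine ext_inner_left 𝕜 fun φ => ?_
  rw [ContinuousLinearMap.adjoint_inner_right, L2.inner_def, L2.inner_def]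
  calc ∫ x, inner 𝕜 (T φ x) (ψ x) ∂μ
      = ∫ x in R, inner 𝕜 (koopman 𝕜 f g (μ.restrict D) (μ.restrict R) φ x) (ψ x) ∂μ := by
        rw [← integral_indicator hR]
        refine integral_congr_ae ((hT φ).mono fun x hx => ?_)
        by_cases hxR : x ∈ R <;> simp [hx, hxR]
    _ = ∫ x in D, inner 𝕜 (φ x) (koopman 𝕜 g f (μ.restrict R) (μ.restrict D) ψ x) ∂μ :=
        h.integral_inner_koopman (Lp.aestronglyMeasurable φ).restrict hψ.1
    _ = ∫ x, inner 𝕜 (φ x) (hmem.toLp _ x) ∂μ := by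
        rw [← integral_indicator hD]
        refine integral_congr_ae (hmem.coeFn_toLp.mono fun x hx => ?_)
        by_cases hxD : x ∈ D <;> simp [hx, hxD]

theorem isIndicatorMul_comp_adjoint (h : IsNonsingularIso f g (μ.restrict D) (μ.restrict R))
    (hD : MeasurableSet D) (hR : MeasurableSet R)
    (hT : ∀ φ : Lp E 2 μ, T φ =ᵐ[μ]
      R.indicator (koopman 𝕜 f g (μ.restrict D) (μ.restrict R) φ)) :
    IsIndicatorMul (T ∘L ContinuousLinearMap.adjoint T) R := fun ψ => by
  have hadj : ContinuousLinearMap.adjoint T ψ =ᵐ[μ.restrict D]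
      koopman 𝕜 g f (μ.restrict R) (μ.restrict D) ψ :=
    Filter.EventuallyEq.trans (ae_restrict_of_ae (h.coeFn_adjoint hD hR hT ψ))
      (indicator_ae_eq_restrict hD)
  exact (hT _).trans ((ae_eq_restrict_iff_indicator_ae_eq hR).1
    ((h.koopman_congr_ae hadj).trans (h.koopman_koopman ψ)))

end IsNonsingularIso

theorem rnDeriv_map_restrict_ae_eq_pushDeriv [SigmaFinite μ]
    (hf : Measure.QuasiMeasurePreserving f (μ.restrict D) (μ.restrict R)) (hR : MeasurableSet R) :
    ((μ.restrict D).map f).rnDeriv (μ.restrict R) =ᵐ[μ.restrict R] pushDeriv μ D f := by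
  have hac := hf.absolutelyContinuous
  have hmem : ∀ᵐ y ∂(μ.restrict D).map f, y ∈ R := hac.ae_le (ae_restrict_mem hR)
  have hdensity : (μ.restrict D).map f = (μ.restrict R).withDensity (pushDeriv μ D f) := by
    rw [← restrict_withDensity hR, pushDeriv,
      Measure.withDensity_rnDeriv_eq _ _ (hac.trans Measure.restrict_le_self.absolutelyContinuous),
      Measure.restrict_eq_self_of_ae_mem hmem]
  rw [hdensity]
  exact Measure.rnDeriv_withDensity _ (Measure.measurable_rnDeriv _ _)

theorem Taction_ae_eq_indicator_koopman [SigmaFinite μ]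
    (hf : Measure.QuasiMeasurePreserving f (μ.restrict D) (μ.restrict R)) (hR : MeasurableSet R)
    (φ : X → ℂ) :
    Taction μ R D f g φ =ᵐ[μ]
      R.indicator (koopman ℂ f g (μ.restrict D) (μ.restrict R) φ) := by
  refine (ae_eq_restrict_iff_indicator_ae_eq hR).1 ?_
  filter_upwards [rnDeriv_map_restrict_ae_eq_pushDeriv hf hR] with x hx
  simp [koopman, hx]

end KoopmanBetweenSubsets

theorem RelBranchingSystem.isNonsingularIso [MeasurableSpace X] {μ : Measure X} {r s : E1 → V0}
    {V : Set V0} {R : E1 → Set X} {D : V0 → Set X} {f finv : E1 → X → X}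
    (hbs : RelBranchingSystem r s V μ R D f finv) (e : E1) :
    IsNonsingularIso (f e) (finv e) (μ.restrict (D (r e))) (μ.restrict (R e)) where
  quasiMeasurePreserving := by
    simpa [Measure.restrict_restrict, hbs.measD] using
      Measure.QuasiMeasurePreserving.restrict ⟨hbs.measf e, hbs.ac_f e⟩ (hbs.mapsf e)
  quasiMeasurePreserving_inv := by
    simpa [Measure.restrict_restrict, hbs.measR] using
      Measure.QuasiMeasurePreserving.restrict ⟨hbs.measfinv e, hbs.ac_finv e⟩ (hbs.mapsfinv e)
  left_inv := hbs.inv_left e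
  right_inv := hbs.inv_right e

theorem statement3_general [MeasurableSpace X] {μ : Measure X} [SigmaFinite μ]
    (r s : E1 → V0) (V : Set V0) (R : E1 → Set X) (D : V0 → Set X) (f finv : E1 → X → X)
    (hbs : RelBranchingSystem r s V μ R D f finv)
    (T : E1 → (Lp ℂ 2 μ →L[ℂ] Lp ℂ 2 μ))
    (hT : ∀ e, ∀ φ : Lp ℂ 2 μ, ⇑(T e φ) =ᵐ[μ] Taction μ (R e) (D (r e)) (f e) (finv e) ⇑φ)
    (P : V0 → (Lp ℂ 2 μ →L[ℂ] Lp ℂ 2 μ))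
    (hP : ∀ v, IsIndicatorMul (P v) (D v)) :
    (∀ v, ContinuousLinearMap.adjoint (P v) = P v) ∧
    (∀ v, P v ∘L P v = P v) ∧
    (∀ u v, u ≠ v → P u ∘L P v = 0) ∧
    (∀ v ∈ V, ∀ F : Finset E1, (∀ e, e ∈ F ↔ s e = v) → F.Nonempty →
      P v = ∑ e ∈ F, T e ∘L ContinuousLinearMap.adjoint (T e)) := by
  refine ⟨fun v => (hP v).adjoint_eq, fun v => (hP v).comp_self,
    fun u v huv => (hP u).comp_eq_zero (hP v) (hbs.disjD u v huv), fun v hv F hF hne => ?_⟩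
  have hTT (e : E1) : IsIndicatorMul (T e ∘L ContinuousLinearMap.adjoint (T e)) (R e) := by
    have h := hbs.isNonsingularIso e
    exact h.isIndicatorMul_comp_adjoint (hbs.measD _) (hbs.measR e) fun φ =>
      (hT e φ).trans (Taction_ae_eq_indicator_koopman h.quasiMeasurePreserving (hbs.measR e) φ)
  have hD : (⋃ e ∈ F, R e) =ᵐ[μ] D v := by
    simpa only [hF] using!
      (measure_symmDiff_eq_zero_iff.1 (hbs.CK v hv (hne.imp fun e => (hF e).1))).symm
  have hsum := IsIndicatorMul.sum F (fun e _ => hTT e) fun e _ e' _ => hbs.disjR e e'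
  exact (hP v).unique (hsum.congr_set hD)

/-- The multiplication operators `P v = M_{χ_{D v}}` on `L²(X,μ)` are
self-adjoint idempotents satisfying `P u ∘ P v = 0` for `u ≠ v`, and for every `v ∈ V`
emitting at least one edge one has the Cuntz–Krieger relation
`P v = Σ_{e : s e = v} T_e T_e*`. -/
theorem statement3 [MeasurableSpace X] {μ : Measure X} [SigmaFinite μ]
    (r s : E1 → V0) [Fintype V0] [Fintype E1] [DecidableEq V0] (V : Set V0)
    (R : E1 → Set X) (D : V0 → Set X) (f finv : E1 → X → X)
    (hbs : RelBranchingSystem r s V μ R D f finv)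
    (T : E1 → (Lp ℂ 2 μ →L[ℂ] Lp ℂ 2 μ))
    (hT : ∀ e, ∀ φ : Lp ℂ 2 μ, ⇑(T e φ) =ᵐ[μ] Taction μ (R e) (D (r e)) (f e) (finv e) ⇑φ)
    (P : V0 → (Lp ℂ 2 μ →L[ℂ] Lp ℂ 2 μ))
    (hP : ∀ v, ∀ φ : Lp ℂ 2 μ, ⇑(P v φ) =ᵐ[μ] (D v).indicator fun x => (φ : X → ℂ) x) :
    (∀ v, ContinuousLinearMap.adjoint (P v) = P v) ∧
    (∀ v, P v ∘L P v = P v) ∧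
    (∀ u v, u ≠ v → P u ∘L P v = 0) ∧
    (∀ v ∈ V, (∃ e, s e = v) →
      P v = ∑ e ∈ Finset.univ.filter (fun e => s e = v),
        T e ∘L ContinuousLinearMap.adjoint (T e)) := by
  obtain ⟨hadj, hidem, horth, hCK⟩ := statement3_general r s V R D f finv hbs T hT P hP
  exact ⟨hadj, hidem, horth, fun v hv ⟨e, he⟩ => hCK v hv _ (by simp) ⟨e, by simpa using he⟩⟩

end
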